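/- Let μ be a probability measure on [0,∞) with finite second moment and mean m̄ = ∫ x μ(dx), let 0 ≤ c ≤ m̄, and let a* ≥ 0 satisfy ∫ (x − a*)₊ μ(dx) = c. Then for every reinsurance treaty η ∈ 𝓜 (for μ, with n = 1) whose reinsured mean satisfies ∫ y η(dx,dy) = c, the variance of the retained-loss distribution T_#η is at least the variance of the distribution of min(X, a*) under μ: Var(T_#η) ≥ Var((x ↦ min(x, a*))_#μ). Equivalently, among all (possibly randomized) treaties with expected reinsured amount c, the stop-loss treaty (Id, x ↦ (x − a*)₊)_#μ minimizes the retained variance. -/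

import Mathlib

/-!
For random variables of a common mean, comparing variances is the same as comparing second moments
about the fixed point `a`. If `R ≤ X`, then `min X a` is pointwise at least as close to `a` as `R`:
it equals `a` where `a ≤ X`, and `R ≤ X = min X a ≤ a` elsewhere. If the mean of `R` exceeds that of
`min X a`, replacing `R` by `R - d` with a constant `d ≥ 0` equalizes the means, keeps the variance,
and preserves `R - d ≤ X`.
-/

open MeasureTheory Filter Topology Set

noncomputable section

/-- The variance `∫ t² dξ − (∫ t dξ)²` of a distribution `ξ` on ℝ. -/
def mvar (ξ : Measure ℝ) : ℝ := (∫ t, t ^ 2 ∂ξ) - (∫ t, t ∂ξ) ^ 2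

section VarianceComparison

open scoped ProbabilityTheory

theorem abs_min_sub_le_abs_sub {α : Type*} [AddCommGroup α] [LinearOrder α] [IsOrderedAddMonoid α]
    {r x : α} (a : α) (h : r ≤ x) : |min x a - a| ≤ |r - a| := by
  rcases le_total x a with hxa | hax
  · rw [min_eq_left hxa, abs_sub_comm x, abs_sub_comm r]
    exact abs_le_abs_of_nonneg (sub_nonneg.2 hxa) (sub_le_sub_left h a)
  · rw [min_eq_right hax, sub_self, abs_zero]
    exact abs_nonneg _

variable {Ω : Type*} [MeasurableSpace Ω] {P : Measure Ω} {X R : Ω → ℝ}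

theorem memLp_min_const_of_le [IsFiniteMeasure P] {p : ENNReal} (hX : AEStronglyMeasurable X P)
    (hR : MemLp R p P) (hRX : R ≤ᵐ[P] X) (a : ℝ) : MemLp (fun ω => min (X ω) a) p P := by
  have hsub : MemLp (fun ω => min (X ω) a - a) p P :=
    (hR.sub (memLp_const a)).of_le ((hX.inf aestronglyMeasurable_const).sub
      aestronglyMeasurable_const) (hRX.mono fun _ h => abs_min_sub_le_abs_sub a h)
  simpa only [Pi.add_def, sub_add_cancel] using hsub.add (memLp_const a)

theorem integral_min_const [IsFiniteMeasure P] (hX : Integrable X P) (a : ℝ) :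
    ∫ ω, min (X ω) a ∂P = ∫ ω, X ω ∂P - ∫ ω, max (X ω - a) 0 ∂P := by
  have hexcess : Integrable (fun ω => max (X ω - a) 0) P :=
    (hX.sub (integrable_const a)).sup (integrable_const 0)
  rw [← integral_sub hX hexcess]
  exact integral_congr_ae (ae_of_all _ fun ω => inf_eq_sub_posPart_sub (X ω) a)

variable [IsProbabilityMeasure P]

theorem mvar_map_eq_variance (hX : MemLp X 2 P) : mvar (P.map X) = Var[X; P] := by
  rw [mvar, integral_map hX.aemeasurable (by fun_prop), integral_map hX.aemeasurable (by fun_prop),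
    ProbabilityTheory.variance_eq_sub hX]
  rfl

theorem integral_sub_const {E : Type*} [NormedAddCommGroup E] [NormedSpace ℝ E] [CompleteSpace E]
    {f : Ω → E} (hf : Integrable f P) (b : E) : ∫ ω, (f ω - b) ∂P = ∫ ω, f ω ∂P - b := by
  rw [integral_sub hf (integrable_const b), integral_const, probReal_univ, one_smul]

theorem variance_eq_integral_sub_sq_sub_sq (hX : MemLp X 2 P) (a : ℝ) :
    Var[X; P] = ∫ ω, (X ω - a) ^ 2 ∂P - (∫ ω, X ω ∂P - a) ^ 2 := by
  have hsub : MemLp (fun ω => X ω - a) 2 P := hX.sub (memLp_const a)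
  rw [← ProbabilityTheory.variance_sub_const hX.aestronglyMeasurable a,
    ProbabilityTheory.variance_eq_sub hsub, integral_sub_const (hX.integrable one_le_two)]
  rfl

theorem variance_min_const_le_of_integral_eq (hX : AEStronglyMeasurable X P) (hR : MemLp R 2 P)
    (hRX : R ≤ᵐ[P] X) {a : ℝ} (hmean : ∫ ω, min (X ω) a ∂P = ∫ ω, R ω ∂P) :
    Var[fun ω => min (X ω) a; P] ≤ Var[R; P] := by
  have hM : MemLp (fun ω => min (X ω) a) 2 P := memLp_min_const_of_le hX hR hRX a
  rw [variance_eq_integral_sub_sq_sub_sq hM a, variance_eq_integral_sub_sq_sub_sq hR a, hmean]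
  refine sub_le_sub_right (integral_mono_ae (hM.sub (memLp_const a)).integrable_sq
    (hR.sub (memLp_const a)).integrable_sq ?_) _
  exact hRX.mono fun _ h => sq_le_sq.2 (abs_min_sub_le_abs_sub a h)

theorem variance_min_const_le_of_integral_le (hX : AEStronglyMeasurable X P) (hR : MemLp R 2 P)
    (hRX : R ≤ᵐ[P] X) {a : ℝ} (hmean : ∫ ω, min (X ω) a ∂P ≤ ∫ ω, R ω ∂P) :
    Var[fun ω => min (X ω) a; P] ≤ Var[R; P] := by
  set d : ℝ := ∫ ω, R ω ∂P - ∫ ω, min (X ω) a ∂P with hd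
  have hshift : ∫ ω, min (X ω) a ∂P = ∫ ω, (R ω - d) ∂P := by
    rw [integral_sub_const (hR.integrable one_le_two), hd, sub_sub_cancel]
  have hle : (fun ω => R ω - d) ≤ᵐ[P] X :=
    hRX.mono fun _ h => (sub_le_self _ (sub_nonneg.2 hmean)).trans h
  rw [← ProbabilityTheory.variance_sub_const hR.aestronglyMeasurable d]
  exact variance_min_const_le_of_integral_eq hX (hR.sub (memLp_const d)) hle hshift

end VarianceComparison

section Treaties

variable {μ : Measure ℝ} {η : Measure (ℝ × ℝ)}

theorem ae_nonneg_and_le_of_measure_eq_one [IsProbabilityMeasure η]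
    (hη : η {q : ℝ × ℝ | 0 ≤ q.2 ∧ q.2 ≤ q.1} = 1) : ∀ᵐ q ∂η, 0 ≤ q.2 ∧ q.2 ≤ q.1 :=
  (mem_ae_iff_prob_eq_one ((measurableSet_le measurable_const measurable_snd).inter
    (measurableSet_le measurable_snd measurable_fst))).2 hη

theorem memLp_fst_sub_snd_of_map_fst {p : ENNReal} (hμ : MemLp id p μ) (hfst : η.map Prod.fst = μ)
    (hη : ∀ᵐ q ∂η, 0 ≤ q.2 ∧ q.2 ≤ q.1) : MemLp (fun q : ℝ × ℝ => q.1 - q.2) p η := by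
  subst hfst
  have hX : MemLp Prod.fst p η := hμ.comp_of_map measurable_fst.aemeasurable
  refine hX.of_le (by fun_prop) ?_
  filter_upwards [hη] with q hq
  exact abs_le_abs_of_nonneg (sub_nonneg.2 hq.2) (sub_le_self _ hq.1)

theorem stmt13_general [IsProbabilityMeasure η] (hfst : η.map Prod.fst = μ)
    (hμ : Integrable id μ) (hR : MemLp (fun q : ℝ × ℝ => q.1 - q.2) 2 η)
    (hY : ∀ᵐ q ∂η, 0 ≤ q.2) {a : ℝ} (hmean : ∫ q, q.2 ∂η ≤ ∫ x, max (x - a) 0 ∂μ) :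
    mvar (μ.map fun x => min x a) ≤ mvar (η.map fun q : ℝ × ℝ => q.1 - q.2) := by
  subst hfst
  have hX : Integrable Prod.fst η := hμ.comp_measurable measurable_fst
  have hYint : Integrable Prod.snd η := by
    simpa only [Pi.sub_def, sub_sub_cancel] using hX.sub (hR.integrable one_le_two)
  have hRX : (fun q : ℝ × ℝ => q.1 - q.2) ≤ᵐ[η] Prod.fst := hY.mono fun q h => sub_le_self q.1 h
  have hretained : ∫ q, min q.1 a ∂η ≤ ∫ q, (q.1 - q.2) ∂η := by
    rw [integral_map (by fun_prop) (by fun_prop)] at hmean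
    rw [integral_min_const hX, integral_sub hX hYint]
    exact sub_le_sub_left hmean _
  have hM : MemLp (fun q : ℝ × ℝ => min q.1 a) 2 η :=
    memLp_min_const_of_le hX.aestronglyMeasurable hR hRX a
  rw [Measure.map_map (by fun_prop) measurable_fst, Function.comp_def, mvar_map_eq_variance hM,
    mvar_map_eq_variance hR]
  exact variance_min_const_le_of_integral_le hX.aestronglyMeasurable hR hRX hretained

end Treaties

/-- among all (possibly randomized) reinsurance treaties whose
expected reinsured amount equals `c`, the stop-loss treaty with retention `a*`
(where `∫ (x − a*)₊ dμ = c`) minimizes the retained variance: for every treaty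
`η` with `∫ y dη = c`, `Var(T_#η) ≥ Var((min(·,a*))_#μ)`. -/
theorem stmt13 (μ : Measure ℝ) [IsProbabilityMeasure μ]
    (hμ : μ (Ici 0) = 1)
    (hmom : Integrable (fun x : ℝ => x ^ 2) μ)
    (c : ℝ) (hc0 : 0 ≤ c) (hcm : c ≤ ∫ x, x ∂μ)
    (a : ℝ) (ha0 : 0 ≤ a) (ha : ∫ x, max (x - a) 0 ∂μ = c)
    (η : Measure (ℝ × ℝ)) (hηp : IsProbabilityMeasure η)
    (hη1 : η.map Prod.fst = μ)
    (hη2 : η {q : ℝ × ℝ | 0 ≤ q.2 ∧ q.2 ≤ q.1} = 1)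
    (hmean : ∫ q : ℝ × ℝ, q.2 ∂η = c) :
    mvar (μ.map fun x => min x a) ≤ mvar (η.map fun q : ℝ × ℝ => q.1 - q.2) := by
  have hμ₂ : MemLp id 2 μ := (memLp_two_iff_integrable_sq aestronglyMeasurable_id).2 hmom
  have hη : ∀ᵐ q ∂η, 0 ≤ q.2 ∧ q.2 ≤ q.1 := ae_nonneg_and_le_of_measure_eq_one hη2
  exact stmt13_general hη1 (hμ₂.integrable one_le_two) (memLp_fst_sub_snd_of_map_fst hμ₂ hη1 hη)
    (hη.mono fun _ h => h.1) (hmean.trans ha.symm).le
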